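/- Let α > 0, |ε| < 1 and α(1 + |ε|) < 4, and let F be the FLM. Let P₀ = {(θ,x) ∈ (ℝ/ℤ)×ℝ : x = 1/2} and, for k ≥ 1, let P₋ₖ = {p ∈ (ℝ/ℤ)×ℝ : F^k(p) ∈ P₀} be the k-th pre-critical set. For a sign sequence s = (s₁,…,s_k) ∈ {+,−}^k define the sets P(s) recursively by P(∅) = P₀ and P(s₁,…,s_j,σ) = H_σ(P(s₁,…,s_j) ∩ S₁) for σ ∈ {+,−} (so points of P(s₁,…,s_j) outside S₁ contribute nothing). Then for every k ≥ 1, P₋ₖ = ⋃_{s ∈ {+,−}^k} P(s). -/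

import Mathlib

/-- The forced logistic map `F(θ,x) = (θ+ω, α x (1-x)(1 + ε cos 2πθ))`,
with the circle `ℝ/ℤ` modelled by `ℝ`. -/
noncomputable def flmF (α ε ω : ℝ) (p : ℝ × ℝ) : ℝ × ℝ :=
  (p.1 + ω, α * p.2 * (1 - p.2) * (1 + ε * Real.cos (2 * Real.pi * p.1)))

/-- The set `S₁` of points of the cylinder `ℝ × [0,1]` lying on or below the
post-critical set `P₁ = {x = (α/4)(1 + ε cos(2π(θ-ω)))}`. -/
def flmS1 (α ε ω : ℝ) : Set (ℝ × ℝ) :=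
  {p : ℝ × ℝ | p.2 ∈ Set.Icc (0:ℝ) 1 ∧
    p.2 ≤ α / 4 * (1 + ε * Real.cos (2 * Real.pi * (p.1 - ω)))}

/-- The two inverse branches of the forced logistic map on `S₁`:
`flmH α ε ω true = H₊` (lower branch, with `-√`), `flmH α ε ω false = H₋`
(upper branch, with `+√`). -/
noncomputable def flmH (α ε ω : ℝ) (σ : Bool) (p : ℝ × ℝ) : ℝ × ℝ :=
  (p.1 - ω,
    1 / 2 + (if σ then (-1 : ℝ) else 1) *
      Real.sqrt (1 / 4 - p.2 / (α * (1 + ε * Real.cos (2 * Real.pi * (p.1 - ω))))))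

/-- The sets `P(s)` indexed by finite sign sequences `s ∈ {+,-}^k` (encoded as lists of
booleans, `true = +`, the outermost applied branch first in the list):
`P(∅) = P₀ = {x = 1/2}` (the critical set) and `P(σ, s) = H_σ (P(s) ∩ S₁)`,
points of `P(s)` outside `S₁` contributing nothing. -/
noncomputable def flmP (α ε ω : ℝ) : List Bool → Set (ℝ × ℝ)
  | [] => {p : ℝ × ℝ | p.2 = 1 / 2}
  | σ :: s => flmH α ε ω σ '' (flmP α ε ω s ∩ flmS1 α ε ω)

/-!
A critical point has height `1/2 > 0`, and the fibre map `x ↦ a x (1 - x)` with `a ≥ 0` is positive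
only for `x ∈ (0, 1)`; hence every pre-critical point has height in `(0, 1)`. Since moreover
`a x (1 - x) ≤ a / 4`, any `F p` of height in `[0, 1]` belongs to `S₁`. Over a point `q ∈ S₁` of
positive height, `F p = q` is a quadratic equation in the height of `p`, whose two solutions are
`H₊ q` and `H₋ q`. Therefore `F⁻¹(A) = H₊(A ∩ S₁) ∪ H₋(A ∩ S₁)` for every `A` of heights in
`(0, 1]`; apply this to `A = P₋ₖ` and induct on `k`.
-/

section Logistic

variable {a x y : ℝ}

theorem logistic_le (ha : 0 ≤ a) (x : ℝ) : a * x * (1 - x) ≤ a / 4 := by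
  linarith [mul_nonneg ha (sq_nonneg (x - 1 / 2))]

theorem mem_Ioo_of_logistic_pos (ha : 0 ≤ a) (h : 0 < a * x * (1 - x)) : x ∈ Set.Ioo (0 : ℝ) 1 := by
  rw [mul_assoc] at h
  have hx : 0 < x * (1 - x) := pos_of_mul_pos_right h ha
  constructor <;> nlinarith

theorem logistic_eq_iff_exists_sign (ha : a ≠ 0) (hy : y / a ≤ 1 / 4) :
    a * x * (1 - x) = y ↔
      ∃ σ : Bool, 1 / 2 + (if σ then (-1 : ℝ) else 1) * √(1 / 4 - y / a) = x := by
  calc a * x * (1 - x) = y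
    _ ↔ (x - 1 / 2) ^ 2 = 1 / 4 - y / a := by
      rw [eq_sub_iff_add_eq', ← eq_sub_iff_add_eq, div_eq_iff ha, eq_comm]
      ring_nf
    _ ↔ x - 1 / 2 = √(1 / 4 - y / a) ∨ x - 1 / 2 = -√(1 / 4 - y / a) := by
      rw [← sq_eq_sq_iff_eq_or_eq_neg, Real.sq_sqrt (sub_nonneg.mpr hy)]
    _ ↔ _ := by
      simp only [Bool.exists_bool, Bool.false_eq_true, if_false, if_true, one_mul, neg_one_mul,
        sub_eq_iff_eq_add', eq_comm]

end Logistic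

/-- The growth rate `α (1 + ε cos 2πθ)` of the logistic map that `flmF α ε ω` induces on the fibre
over `θ`. -/
noncomputable def flmRate (α ε θ : ℝ) : ℝ :=
  α * (1 + ε * Real.cos (2 * Real.pi * θ))

section ForcedLogistic

variable {α ε ω : ℝ}

theorem flmRate_nonneg (hα : 0 ≤ α) (hε : |ε| ≤ 1) (θ : ℝ) : 0 ≤ flmRate α ε θ := by
  have hcos : |ε * Real.cos (2 * Real.pi * θ)| ≤ 1 := by
    rw [abs_mul]
    exact mul_le_one₀ hε (abs_nonneg _) (Real.abs_cos_le_one _)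
  exact mul_nonneg hα (by linarith [neg_le_of_abs_le hcos])

theorem flmF_eq (p : ℝ × ℝ) :
    flmF α ε ω p = (p.1 + ω, flmRate α ε p.1 * p.2 * (1 - p.2)) := by
  ext
  · rfl
  · simp only [flmF, flmRate]
    ring

theorem mem_flmS1_iff {q : ℝ × ℝ} :
    q ∈ flmS1 α ε ω ↔ q.2 ∈ Set.Icc (0 : ℝ) 1 ∧ q.2 ≤ flmRate α ε (q.1 - ω) / 4 := by
  rw [flmRate, mul_div_right_comm]
  rfl

theorem flmF_mem_flmS1 {p : ℝ × ℝ} (ha : 0 ≤ flmRate α ε p.1)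
    (hp : (flmF α ε ω p).2 ∈ Set.Icc (0 : ℝ) 1) : flmF α ε ω p ∈ flmS1 α ε ω := by
  refine mem_flmS1_iff.mpr ⟨hp, ?_⟩
  simpa only [flmF_eq, add_sub_cancel_right] using logistic_le ha p.2

theorem flmF_eq_iff_exists_flmH {p q : ℝ × ℝ} (hq : q ∈ flmS1 α ε ω) (hpos : 0 < q.2) :
    flmF α ε ω p = q ↔ ∃ σ, flmH α ε ω σ q = p := by
  have hle : q.2 ≤ flmRate α ε (q.1 - ω) / 4 := (mem_flmS1_iff.mp hq).2
  have ha : 0 < flmRate α ε (q.1 - ω) := by linarith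
  have hdiv : q.2 / flmRate α ε (q.1 - ω) ≤ 1 / 4 := by
    rw [div_le_iff₀ ha]
    linarith
  calc flmF α ε ω p = q
    _ ↔ q.1 - ω = p.1 ∧ flmRate α ε p.1 * p.2 * (1 - p.2) = q.2 := by
      rw [flmF_eq, Prod.ext_iff, ← eq_sub_iff_add_eq, eq_comm (a := p.1)]
    _ ↔ q.1 - ω = p.1 ∧ flmRate α ε (q.1 - ω) * p.2 * (1 - p.2) = q.2 :=
      and_congr_right fun hθ => by rw [hθ]
    _ ↔ ∃ σ, flmH α ε ω σ q = p := by
      rw [logistic_eq_iff_exists_sign ha.ne' hdiv]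
      simp only [Prod.ext_iff, flmH, flmRate, exists_and_left]

theorem flmF_preimage_eq_iUnion_flmH (ha : ∀ θ, 0 ≤ flmRate α ε θ) {A : Set (ℝ × ℝ)}
    (hA : Set.MapsTo Prod.snd A (Set.Ioc (0 : ℝ) 1)) :
    flmF α ε ω ⁻¹' A = ⋃ σ, flmH α ε ω σ '' (A ∩ flmS1 α ε ω) := by
  ext p
  simp only [Set.mem_preimage, Set.mem_iUnion, Set.mem_image]
  constructor
  · intro hp
    have hS : flmF α ε ω p ∈ flmS1 α ε ω :=
      flmF_mem_flmS1 (ha p.1) (Set.Ioc_subset_Icc_self (hA hp))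
    obtain ⟨σ, hσ⟩ := (flmF_eq_iff_exists_flmH hS (hA hp).1).mp rfl
    exact ⟨σ, _, ⟨hp, hS⟩, hσ⟩
  · rintro ⟨σ, q, ⟨hqA, hqS⟩, hσ⟩
    have hpq : flmF α ε ω p = q := (flmF_eq_iff_exists_flmH hqS (hA hqA).1).mpr ⟨σ, hσ⟩
    exact hpq ▸ hqA

theorem snd_mem_Ioo_of_iterate_flmF (ha : ∀ θ, 0 ≤ flmRate α ε θ) (k : ℕ) {p : ℝ × ℝ}
    (hp : ((flmF α ε ω)^[k] p).2 ∈ Set.Ioo (0 : ℝ) 1) : p.2 ∈ Set.Ioo (0 : ℝ) 1 := by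
  induction k generalizing p with
  | zero => exact hp
  | succ k ih =>
    have hFp : 0 < (flmF α ε ω p).2 := (ih hp).1
    rw [flmF_eq] at hFp
    exact mem_Ioo_of_logistic_pos (ha p.1) hFp

theorem iUnion_flmP_succ (α ε ω : ℝ) (k : ℕ) :
    ⋃ s ∈ {l : List Bool | l.length = k + 1}, flmP α ε ω s =
      ⋃ σ, flmH α ε ω σ '' ((⋃ s ∈ {l : List Bool | l.length = k}, flmP α ε ω s) ∩
        flmS1 α ε ω) := by
  simp only [Set.iUnion₂_inter, Set.image_iUnion₂]
  ext p
  simp only [Set.mem_iUnion, Set.mem_ofPred_eq, exists_prop]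
  constructor
  · rintro ⟨_ | ⟨σ, s⟩, hs, hp⟩
    · simp at hs
    · exact ⟨σ, s, Nat.succ_injective hs, hp⟩
  · rintro ⟨σ, s, hs, hp⟩
    exact ⟨σ :: s, congrArg Nat.succ hs, hp⟩

end ForcedLogistic

theorem stmt11_general (α ε ω : ℝ) (hα : 0 ≤ α) (hε : |ε| ≤ 1) (k : ℕ) :
    {p : ℝ × ℝ | (flmF α ε ω)^[k] p ∈ {q : ℝ × ℝ | q.2 = 1 / 2}} =
      ⋃ s ∈ {l : List Bool | l.length = k}, flmP α ε ω s := by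
  have ha : ∀ θ, 0 ≤ flmRate α ε θ := flmRate_nonneg hα hε
  induction k with
  | zero => simp [flmP]
  | succ k ih =>
    set A : Set (ℝ × ℝ) := {p | (flmF α ε ω)^[k] p ∈ {q : ℝ × ℝ | q.2 = 1 / 2}}
    have hA : Set.MapsTo Prod.snd A (Set.Ioc (0 : ℝ) 1) := by
      intro p (hp : ((flmF α ε ω)^[k] p).2 = 1 / 2)
      have hmem : ((flmF α ε ω)^[k] p).2 ∈ Set.Ioo (0 : ℝ) 1 := by norm_num [hp]
      exact Set.Ioo_subset_Ioc_self (snd_mem_Ioo_of_iterate_flmF ha k hmem)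
    calc {p : ℝ × ℝ | (flmF α ε ω)^[k + 1] p ∈ {q : ℝ × ℝ | q.2 = 1 / 2}}
      _ = flmF α ε ω ⁻¹' A := rfl
      _ = ⋃ σ, flmH α ε ω σ '' (A ∩ flmS1 α ε ω) := flmF_preimage_eq_iUnion_flmH ha hA
      _ = ⋃ s ∈ {l : List Bool | l.length = k + 1}, flmP α ε ω s := by
        rw [ih, iUnion_flmP_succ]

/-- For the forced logistic map with `α > 0`, `|ε| < 1`,
`α(1+|ε|) < 4`, the `k`-th pre-critical set `P₋ₖ = {p : F^k(p) ∈ P₀}` is the union of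
the sets `P(s)` over all sign sequences `s ∈ {+,-}^k`. -/
theorem stmt11 (α ε ω : ℝ) (hα : 0 < α) (hε : |ε| < 1) (hbound : α * (1 + |ε|) < 4)
    (k : ℕ) (hk : 1 ≤ k) :
    {p : ℝ × ℝ | (flmF α ε ω)^[k] p ∈ {q : ℝ × ℝ | q.2 = 1 / 2}} =
      ⋃ s ∈ {l : List Bool | l.length = k}, flmP α ε ω s := by
  exact stmt11_general α ε ω hα.le hε.le k
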